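/- For every α : ℕ → {0,1,2} and every β : ℕ → {0,1}: if Φ(α) = κ(β) then γ_α(n) = β(n) for all n ∈ ℕ. -/

import Mathlib

open Filter

/-- `triN s` : numbering of the nodes of the ternary tree:
`N(⟨⟩) = 1`, `N(s * ⟨i⟩) = 2 * N(s) + i - 1`. -/
def triN (s : List (Fin 3)) : ℕ := s.foldl (fun a i => 2 * a + i.val - 1) 1

/-- Initial segment of length `n` of `α`. -/
def seg3 (α : ℕ → Fin 3) (n : ℕ) : List (Fin 3) := List.ofFn fun i : Fin n => α i

/-- `Phi α` is the limit of the Cauchy sequence `x_α^n = 2^(-(n+1)) * N(ᾱ n)`. -/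
noncomputable def Phi (α : ℕ → Fin 3) : ℝ :=
  limUnder atTop fun n => (triN (seg3 α n) : ℝ) / 2 ^ (n + 1)

/-- The rational interval `I_s = [2^(-(|s|+1))·(N s - 1), 2^(-(|s|+1))·(N s + 1)]`. -/
def Iseg (s : List (Fin 3)) : ℚ × ℚ :=
  (((triN s : ℚ) - 1) / 2 ^ (s.length + 1), ((triN s : ℚ) + 1) / 2 ^ (s.length + 1))

/-- The Cantor discontinuum map `κ(β) = Σ_i 2·β(i)·3^(-(i+1))`. -/
noncomputable def kappa (β : ℕ → Fin 2) : ℝ :=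
  ∑' i : ℕ, 2 * ((β i : ℕ) : ℝ) / 3 ^ (i + 1)

/-- The left endpoint `Σ_{i<|s|} 2·s_i·3^(-(i+1))` of the Cantor interval `C_s`. -/
def Cleft (s : List (Fin 2)) : ℚ :=
  ∑ i : Fin s.length, 2 * ((s.get i : ℕ) : ℚ) / 3 ^ ((i : ℕ) + 1)

lemma three_pow_le_two_pow (k : ℕ) : ∃ n : ℕ, 3 ^ k ≤ 2 ^ n :=
  ⟨2 * k, by
    calc (3 : ℕ) ^ k ≤ 4 ^ k := Nat.pow_le_pow_left (by norm_num) k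
      _ = 2 ^ (2 * k) := by rw [pow_mul]; norm_num⟩

/-- `L k` is the least `n` with `2^(-n) ≤ 3^(-k)`, i.e. with `3^k ≤ 2^n`. -/
def L3 (k : ℕ) : ℕ := Nat.find (three_pow_le_two_pow k)

/-- The finite binary sequence `γ̄_α n`. -/
def gammaList (α : ℕ → Fin 3) : ℕ → List (Fin 2)
  | 0 => []
  | n + 1 =>
    gammaList α n ++
      [if (Iseg (seg3 α (L3 (n + 1)))).2 < Cleft (gammaList α n ++ [1]) then 0 else 1]

/-- The binary sequence `γ_α` associated with `α : ℕ → {0,1,2}`. -/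
def gamma (α : ℕ → Fin 3) (n : ℕ) : Fin 2 :=
  if (Iseg (seg3 α (L3 (n + 1)))).2 < Cleft (gammaList α n ++ [1]) then 0 else 1

lemma triN_pos_aux (s : List (Fin 3)) (a : ℕ) (ha : 1 ≤ a) :
    1 ≤ s.foldl (fun a i => 2 * a + i.val - 1) a := by
  induction s generalizing a with
  | nil => simpa using ha
  | cons x t ih => exact ih _ (by show 1 ≤ 2 * a + x.val - 1; omega)

lemma triN_succ (α : ℕ → Fin 3) (n : ℕ) :
    (triN (seg3 α (n + 1)) : ℝ) = 2 * (triN (seg3 α n) : ℝ) + ((α n).val : ℝ) - 1 := by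
  have h1 : triN (seg3 α (n + 1)) = 2 * triN (seg3 α n) + (α n).val - 1 := by
    unfold seg3
    rw [List.ofFn_succ_last]
    simp [triN, List.foldl_append]
  have h2 : 1 ≤ triN (seg3 α n) := triN_pos_aux _ 1 le_rfl
  rw [h1, Nat.cast_sub (by omega)]
  push_cast
  ring

lemma alpha_bd (α : ℕ → Fin 3) (n : ℕ) : (0:ℝ) ≤ ((α n).val : ℝ) ∧ ((α n).val : ℝ) ≤ 2 := by
  refine ⟨by positivity, ?_⟩
  have : (α n).val ≤ 2 := by omega
  exact_mod_cast this

lemma Phi_tendsto (α : ℕ → Fin 3) :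
    Tendsto (fun n => (triN (seg3 α n) : ℝ) / 2 ^ (n + 1)) atTop (nhds (Phi α)) := by
  apply CauchySeq.tendsto_limUnder
  refine cauchySeq_of_le_geometric (1/2) 1 (by norm_num) fun n => ?_
  obtain ⟨h0, h2⟩ := alpha_bd α n
  rw [triN_succ, Real.dist_eq]
  have : (triN (seg3 α n) : ℝ) / 2 ^ (n + 1) -
      (2 * (triN (seg3 α n) : ℝ) + ((α n).val : ℝ) - 1) / 2 ^ (n + 1 + 1)
      = (1 - ((α n).val : ℝ)) / 4 * (1/2)^n := by
    rw [one_div, inv_pow]; field_simp; ring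
  rw [this, abs_mul, abs_of_nonneg (by positivity : (0:ℝ) ≤ (1/2)^n)]
  gcongr
  rw [abs_le]; constructor <;> linarith

lemma Phi_le (α : ℕ → Fin 3) (n : ℕ) :
    Phi α ≤ ((triN (seg3 α n) : ℝ) + 1) / 2 ^ (n + 1) := by
  have anti : Antitone fun n => ((triN (seg3 α n) : ℝ) + 1) / 2 ^ (n + 1) := by
    refine antitone_nat_of_succ_le fun n => ?_
    obtain ⟨h0, h2⟩ := alpha_bd α n
    rw [triN_succ, pow_succ _ (n+1), div_le_div_iff₀ (by positivity) (by positivity)]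
    have : (0:ℝ) < 2 ^ (n+1) := by positivity
    nlinarith
  refine le_of_tendsto (Phi_tendsto α) (eventually_atTop.2 ⟨n, fun m hm => ?_⟩)
  refine le_trans ?_ (anti hm)
  show (triN (seg3 α m) : ℝ) / 2 ^ (m + 1) ≤ ((triN (seg3 α m) : ℝ) + 1) / 2 ^ (m + 1)
  gcongr; linarith

lemma le_Phi (α : ℕ → Fin 3) (n : ℕ) :
    ((triN (seg3 α n) : ℝ) - 1) / 2 ^ (n + 1) ≤ Phi α := by
  have mono : Monotone fun n => ((triN (seg3 α n) : ℝ) - 1) / 2 ^ (n + 1) := by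
    refine monotone_nat_of_le_succ fun n => ?_
    obtain ⟨h0, h2⟩ := alpha_bd α n
    rw [triN_succ, pow_succ _ (n+1), div_le_div_iff₀ (by positivity) (by positivity)]
    have : (0:ℝ) < 2 ^ (n+1) := by positivity
    nlinarith
  refine ge_of_tendsto (Phi_tendsto α) (eventually_atTop.2 ⟨n, fun m hm => ?_⟩)
  refine le_trans (mono hm) ?_
  show ((triN (seg3 α m) : ℝ) - 1) / 2 ^ (m + 1) ≤ _
  gcongr; linarith

lemma geo_hasSum (n : ℕ) : HasSum (fun i : ℕ => (2:ℝ) / 3 ^ (i + n + 1)) (1 / 3 ^ n) := by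
  have h := (hasSum_geometric_of_lt_one (r := (1/3:ℝ)) (by norm_num) (by norm_num)).mul_left
    (2 / 3 ^ (n+1))
  have e1 : (fun i : ℕ => (2:ℝ) / 3 ^ (i + n + 1)) =
      fun i : ℕ => 2 / 3 ^ (n + 1) * (1 / 3 : ℝ) ^ i := by
    ext i
    rw [one_div, inv_pow, add_assoc, pow_add 3 i]
    field_simp
  have e2 : (1:ℝ) / 3 ^ n = 2 / 3 ^ (n + 1) * (1 - 1 / 3)⁻¹ := by
    rw [pow_succ]
    field_simp
    norm_num
  rw [e1, e2]
  exact h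

lemma term_bd (β : ℕ → Fin 2) (i k : ℕ) : 0 ≤ 2 * ((β i : ℕ) : ℝ) / 3 ^ k ∧
    2 * ((β i : ℕ) : ℝ) / 3 ^ k ≤ 2 / 3 ^ k := by
  refine ⟨by positivity, ?_⟩
  have : (β i : ℕ) ≤ 1 := by omega
  have : ((β i : ℕ) : ℝ) ≤ 1 := by exact_mod_cast this
  gcongr; linarith

lemma kappa_summable (β : ℕ → Fin 2) : Summable fun i : ℕ => 2 * ((β i : ℕ) : ℝ) / 3 ^ (i + 1) :=
  Summable.of_nonneg_of_le (fun i => (term_bd β i _).1) (fun i => (term_bd β i _).2)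
    (geo_hasSum 0).summable

lemma kappa_bd (β : ℕ → Fin 2) (n : ℕ) :
    ∑ i ∈ Finset.range n, 2 * ((β i : ℕ) : ℝ) / 3 ^ (i + 1) ≤ kappa β ∧
    kappa β ≤ ∑ i ∈ Finset.range n, 2 * ((β i : ℕ) : ℝ) / 3 ^ (i + 1) + 1 / 3 ^ n := by
  have hs := kappa_summable β
  have e := hs.sum_add_tsum_nat_add n
  have t0 : 0 ≤ ∑' i : ℕ, 2 * ((β (i + n) : ℕ) : ℝ) / 3 ^ (i + n + 1) :=
    tsum_nonneg fun i => (term_bd β _ _).1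
  have t1 : ∑' i : ℕ, 2 * ((β (i + n) : ℕ) : ℝ) / 3 ^ (i + n + 1) ≤ 1 / 3 ^ n := by
    rw [← (geo_hasSum n).tsum_eq]
    exact Summable.tsum_le_tsum (fun i => (term_bd β _ _).2) ((summable_nat_add_iff n).2 hs)
      (geo_hasSum n).summable
  unfold kappa
  rw [← e]
  constructor <;> linarith

lemma Cleft_eq (s : List (Fin 2)) :
    Cleft s = ∑ i ∈ Finset.range s.length, 2 * ((s.getD i 0 : ℕ) : ℚ) / 3 ^ (i + 1) := by
  unfold Cleft
  rw [Finset.sum_range]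
  refine Finset.sum_congr rfl fun i _ => ?_
  simp

lemma Cleft_append (s : List (Fin 2)) (b : Fin 2) :
    Cleft (s ++ [b]) = Cleft s + 2 * ((b : ℕ) : ℚ) / 3 ^ (s.length + 1) := by
  rw [Cleft_eq, Cleft_eq, List.length_append, List.length_singleton, Finset.sum_range_succ]
  congr 1
  · refine Finset.sum_congr rfl fun i hi => ?_
    rw [List.getD_append _ _ _ _ (Finset.mem_range.1 hi)]
  · simp

lemma gammaList_succ (α : ℕ → Fin 3) (n : ℕ) :
    gammaList α (n + 1) = gammaList α n ++ [gamma α n] := rfl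

lemma gammaList_length (α : ℕ → Fin 3) (n : ℕ) : (gammaList α n).length = n := by
  induction n with
  | zero => rfl
  | succ n ih => rw [gammaList_succ, List.length_append, ih]; rfl

lemma two_pow_L3 (n : ℕ) : (3:ℝ) ^ (n + 1) < 2 ^ (L3 (n + 1)) := by
  have h : 3 ^ (n+1) ≤ 2 ^ (L3 (n+1)) := Nat.find_spec (three_pow_le_two_pow (n+1))
  have hne : 3 ^ (n+1) ≠ 2 ^ (L3 (n+1)) := by
    intro e
    have h3 : Odd (3 ^ (n+1)) := Odd.pow (by decide)
    have h1 : 1 < 3 ^ (n+1) := Nat.one_lt_pow (by omega) (by norm_num)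
    rw [e] at h3 h1
    rcases Nat.eq_zero_or_pos (L3 (n+1)) with h0 | h0
    · rw [h0] at h1; simp at h1
    · exact (Nat.not_even_iff_odd.2 h3) ((Nat.even_pow.2 ⟨by decide, by omega⟩))
  exact_mod_cast lt_of_le_of_ne h hne

lemma gamma_step (α : ℕ → Fin 3) (β : ℕ → Fin 2) (h : Phi α = kappa β) (n : ℕ)
    (hC : (Cleft (gammaList α n) : ℝ) = ∑ i ∈ Finset.range n, 2 * ((β i : ℕ) : ℝ) / 3 ^ (i + 1)) :
    gamma α n = β n := by
  have e : ((Cleft (gammaList α n ++ [1]) : ℚ) : ℝ)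
      = ∑ i ∈ Finset.range n, 2 * ((β i : ℕ) : ℝ) / 3 ^ (i + 1) + 2 / 3 ^ (n+1) := by
    rw [Cleft_append, gammaList_length, ← hC]; push_cast; simp
  have eI : (((Iseg (seg3 α (L3 (n + 1)))).2 : ℚ) : ℝ)
      = ((triN (seg3 α (L3 (n+1))) : ℝ) + 1) / 2 ^ (L3 (n+1) + 1) := by
    simp [Iseg, seg3]
  have k := kappa_bd β (n+1)
  rw [Finset.sum_range_succ, ← h] at k
  have u := Phi_le α (L3 (n+1))
  have l := le_Phi α (L3 (n+1))
  have w : ((triN (seg3 α (L3 (n+1))) : ℝ) + 1) / 2 ^ (L3 (n+1) + 1) =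
    ((triN (seg3 α (L3 (n+1))) : ℝ) - 1) / 2 ^ (L3 (n+1) + 1) + 1 / 2 ^ (L3 (n+1)) := by
    field_simp; ring
  have p : (1:ℝ) / 2 ^ (L3 (n+1)) < 1 / 3 ^ (n+1) :=
    one_div_lt_one_div_of_lt (by positivity) (two_pow_L3 n)
  have q : (2:ℝ) / 3 ^ (n+1) = 1 / 3 ^ (n+1) + 1 / 3 ^ (n+1) := by ring
  unfold gamma
  rcases (by omega : β n = 0 ∨ β n = 1) with hb | hb
  · rw [hb] at k ⊢
    rw [if_pos]
    rw [← Rat.cast_lt (K := ℝ), e, eI]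
    simp only [Fin.val_zero, Nat.cast_zero, mul_zero, zero_div] at k
    linarith [k.2]
  · rw [hb] at k ⊢
    rw [if_neg]
    rw [← Rat.cast_lt (K := ℝ), e, eI]
    simp only [Fin.val_one, Nat.cast_one, mul_one] at k
    linarith [k.1]

theorem stmt15 (α : ℕ → Fin 3) (β : ℕ → Fin 2) (h : Phi α = kappa β) :
    ∀ n : ℕ, gamma α n = β n := by
  have key : ∀ n : ℕ, (Cleft (gammaList α n) : ℝ)
      = ∑ i ∈ Finset.range n, 2 * ((β i : ℕ) : ℝ) / 3 ^ (i + 1) := by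
    intro n
    induction n with
    | zero => simp [gammaList, Cleft_eq]
    | succ n ih =>
      rw [gammaList_succ, Cleft_append, gammaList_length, Finset.sum_range_succ, ← ih,
        gamma_step α β h n ih]
      push_cast
      rfl
  exact fun n => gamma_step α β h n (key n)
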